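/- (Resurrection Lemma) Let M and N be τ-structures with M a substructure of N such that M ≺_{Σ₁} N. Then there exist a τ-structure Q and an embedding j of N into Q such that the restriction of j to M is an elementary embedding of M into Q. -/

import Mathlib

/-!
If `M ≺_{Σ₁} N`, then every quantifier-free formula true of a tuple of `N` stays true after the part
of the tuple outside `M` is replaced by suitable elements of `M`. Hence the sets
`{f : N → M | f fixes M pointwise and preserves φ}`, for `φ` in the quantifier-free diagram of `N`,
have the finite intersection property and lie in an ultrafilter `U` on `N → M`. Take for `Q` the
ultrapower of `M` by `U`, and for `j` the evaluation map `x ↦ [f ↦ f x]`. By Łoś's theorem `j`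
preserves quantifier-free formulas, so it is an embedding; on `M` it agrees with the diagonal, so it
is elementary there.
-/

namespace ModelCompanionship

open FirstOrder Language

universe u v

variable {L : FirstOrder.Language.{u, v}}

/-- A bundled `L`-structure with carrier in `Type (max u v)`. -/
structure BStruc (L : FirstOrder.Language.{u, v}) where
  /-- the underlying set of the structure -/
  carrier : Type (max u v)
  /-- the interpretation of the symbols of `L` -/
  struc : L.Structure carrier

attribute [instance] BStruc.struc

/-- Iterated existential quantification of the last `k` bound variables. -/
def exsN {α : Type*} : ∀ {m k : ℕ}, L.BoundedFormula α (m + k) → L.BoundedFormula α m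
  | _, 0, φ => φ
  | _, _ + 1, φ => exsN φ.ex

/-- `ψ` is a universal (`Π₁`) sentence: `∀ x⃗, φ` with `φ` quantifier-free. -/
def IsUniversalSentence (ψ : L.Sentence) : Prop :=
  ∃ (n : ℕ) (φ : L.BoundedFormula Empty n), φ.IsQF ∧ ψ = φ.alls

/-- `ψ` is a `Π₂` sentence: `∀ x⃗, ∃ y⃗, φ` with `φ` quantifier-free. -/
def IsPi2Sentence (ψ : L.Sentence) : Prop :=
  ∃ (m k : ℕ) (φ : L.BoundedFormula Empty (m + k)), φ.IsQF ∧ ψ = (exsN φ).alls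

/-- `ψ` holds in every model of `T`. -/
def SemConseq (T : L.Theory) (ψ : L.Sentence) : Prop :=
  ∀ M : BStruc L, M.carrier ⊨ T → M.carrier ⊨ ψ

/-- `T` is consistent: it has a model. -/
def Consistent (T : L.Theory) : Prop :=
  ∃ M : BStruc L, M.carrier ⊨ T

/-- `T` is complete: it is consistent and decides every sentence. -/
def IsCompleteTheory (T : L.Theory) : Prop :=
  Consistent T ∧ ∀ ψ : L.Sentence, SemConseq T ψ ∨ SemConseq T ψ.not

/-- `T_∀`: the set of universal sentences true in every model of `T`. -/
def univFrag (T : L.Theory) : L.Theory :=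
  {ψ | IsUniversalSentence ψ ∧ SemConseq T ψ}

/-- Two formulas in the same free variables are `T`-equivalent. -/
def TEquiv (T : L.Theory) {n : ℕ} (φ ψ : L.Formula (Fin n)) : Prop :=
  ∀ M : BStruc L, M.carrier ⊨ T → ∀ v : Fin n → M.carrier, φ.Realize v ↔ ψ.Realize v

section Maps

variable {M : Type (max u v)} {N : Type (max u v)} [L.Structure M] [L.Structure N]

/-- `f` preserves and reflects all first-order formulas (with parameters). -/
def ElementaryOn (f : M → N) : Prop :=
  ∀ (n : ℕ) (φ : L.Formula (Fin n)) (v : Fin n → M),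
    φ.Realize v ↔ φ.Realize fun i => f (v i)

/-- The embedding `e` is `Σ₁`-elementary: every existential formula with parameters
from the domain which holds in the codomain holds in the domain. -/
def Sigma1Elementary (e : M ↪[L] N) : Prop :=
  ∀ (n k : ℕ) (φ : L.BoundedFormula (Fin n) k), φ.IsQF → ∀ v : Fin n → M,
    (φ.exs.Realize fun i => e (v i)) → φ.exs.Realize v

end Maps

/-- `M` is a `T`-existentially closed structure. -/
def IsEC (T : L.Theory) (M : Type (max u v)) [L.Structure M] : Prop :=
  (∃ (N : BStruc L) (_ : M ↪[L] N.carrier), N.carrier ⊨ T) ∧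
    ∀ (N : BStruc L) (e : M ↪[L] N.carrier), N.carrier ⊨ T → Sigma1Elementary e

/-- `T` is model complete: substructure inclusions between models of `T` are elementary. -/
def IsModelComplete (T : L.Theory) : Prop :=
  ∀ (M N : BStruc L) (e : M.carrier ↪[L] N.carrier),
    M.carrier ⊨ T → N.carrier ⊨ T → ElementaryOn (L := L) fun a => e a

/-- `T*` is a model companion of `T`. -/
def IsModelCompanion (T Tstar : L.Theory) : Prop :=
  (∀ M : BStruc L, M.carrier ⊨ T →
      ∃ (N : BStruc L) (_ : M.carrier ↪[L] N.carrier), N.carrier ⊨ Tstar) ∧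
    (∀ M : BStruc L, M.carrier ⊨ Tstar →
      ∃ (N : BStruc L) (_ : M.carrier ↪[L] N.carrier), N.carrier ⊨ T) ∧
    IsModelComplete Tstar

theorem isQF_restrictFreeVar {α β : Type*} [DecidableEq α] {n : ℕ} {φ : L.BoundedFormula α n}
    (hφ : φ.IsQF) (f : φ.freeVarFinset → β) : (φ.restrictFreeVar f).IsQF := by
  induction hφ with
  | falsum => exact BoundedFormula.isQF_bot
  | of_isAtomic h =>
    cases h with
    | equal => exact (BoundedFormula.IsAtomic.equal _ _).isQF
    | rel => exact (BoundedFormula.IsAtomic.rel _ _).isQF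
  | imp _ _ ih₁ ih₂ => exact (ih₁ _).imp (ih₂ _)

section QFDiagram

variable {N Q : Type*} [L.Structure N] [L.Structure Q]

variable (L N) in
/-- The quantifier-free diagram of `N`: the quantifier-free formulas true in `N`. Its free variables
are the elements of `N` themselves, interpreted by `id`, so that no constants are added to `L` and
an interpretation of the diagram in another structure is just a map out of `N`. -/
def qfDiagram : Set (L.Formula N) :=
  {φ | φ.IsQF ∧ φ.Realize id}

theorem inf_mem_qfDiagram {φ ψ : L.Formula N} (hφ : φ ∈ qfDiagram L N) (hψ : ψ ∈ qfDiagram L N) :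
    φ ⊓ ψ ∈ qfDiagram L N :=
  ⟨hφ.1.inf hψ.1, Formula.realize_inf.2 ⟨hφ.2, hψ.2⟩⟩

theorem realize_iff_of_realize_qfDiagram {f : N → Q} (hf : ∀ φ ∈ qfDiagram L N, φ.Realize f)
    {φ : L.Formula N} (hφ : φ.IsQF) : φ.Realize f ↔ φ.Realize id := by
  refine ⟨fun h => by_contra fun hid => ?_, fun h => hf φ ⟨hφ, h⟩⟩
  exact Formula.realize_not.1 (hf φ.not ⟨hφ.not, Formula.realize_not.2 hid⟩) h

/-- The embedding of `N` given by an interpretation of its quantifier-free diagram. -/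
def embeddingOfQFDiagram (f : N → Q) (hf : ∀ φ ∈ qfDiagram L N, φ.Realize f) : N ↪[L] Q where
  toFun := f
  inj' a b hab := by
    have h := realize_iff_of_realize_qfDiagram hf
      (BoundedFormula.IsAtomic.equal _ _).isQF (φ := (Term.var a).equal (Term.var b))
    simp only [Formula.realize_equal, Term.realize_var] at h
    exact h.1 hab
  map_fun' F x := by
    have h := realize_iff_of_realize_qfDiagram hf (BoundedFormula.IsAtomic.equal _ _).isQF
      (φ := (Term.var (Structure.funMap F x)).equal (Term.func F fun i => Term.var (x i)))
    simp only [Formula.realize_equal, Term.realize_var, Term.realize_func] at h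
    exact h.2 rfl
  map_rel' R x := by
    have h := realize_iff_of_realize_qfDiagram hf (BoundedFormula.IsAtomic.rel _ _).isQF
      (φ := R.formula fun i => Term.var (x i))
    simp only [Formula.realize_rel, Term.realize_var] at h
    exact h

end QFDiagram

section Ultrapower

open Filter

variable {M N : Type*} [L.Structure M]

/-- Evaluation at a point of `N`, as a map from `N` into the ultrapower of `M` by an ultrafilter on
the set of maps `N → M`. -/
def ultraEval (U : Ultrafilter (N → M)) (x : N) : (U : Filter (N → M)).Product fun _ => M :=
  ((fun f => f x : (N → M) → M) : (U : Filter (N → M)).Product fun _ => M)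

theorem realize_ultraEval [Nonempty M] (U : Ultrafilter (N → M)) {α : Type*} (φ : L.Formula α)
    (v : α → N) :
    (φ.Realize fun i => ultraEval U (v i)) ↔
      ∀ᶠ f in (U : Filter (N → M)), φ.Realize fun i => f (v i) :=
  Ultraproduct.realize_formula_cast (u := U) (M := fun _ => M) φ fun i f => f (v i)

theorem realize_ultraEval_of_leftInverse [Nonempty M] {U : Ultrafilter (N → M)} {i : M → N}
    (hU : ∀ᶠ f in (U : Filter (N → M)), Function.LeftInverse f i) {α : Type*} (φ : L.Formula α)
    (v : α → M) : (φ.Realize fun a => ultraEval U (i (v a))) ↔ φ.Realize v := by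
  rw [realize_ultraEval, ← eventually_const (p := φ.Realize v) (f := (U : Filter (N → M)))]
  exact eventually_congr (hU.mono fun f hf => by simp only [hf _])

end Ultrapower

section Sigma1

open Filter Function

variable {M N : Type (max u v)} [L.Structure M] [L.Structure N]

theorem elementaryOn_of_surjective (e : M ↪[L] N) (he : Surjective e) :
    ElementaryOn (L := L) e := by
  let g : M ≃[L] N := ⟨Equiv.ofBijective e ⟨e.injective, he⟩, e.map_fun', e.map_rel'⟩
  exact fun n φ v => (StrongHomClass.realize_formula g φ).symm

variable {e : M ↪[L] N}

theorem Sigma1Elementary.nonempty [Nonempty N] (he : Sigma1Elementary e) : Nonempty M := by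
  have hN : (⊤ : L.BoundedFormula (Fin 0) 1).exs.Realize fun i => e (Fin.elim0 i) :=
    BoundedFormula.realize_exs.2 ⟨fun _ => Classical.arbitrary N, BoundedFormula.realize_top.2 ⟨⟩⟩
  obtain ⟨x, -⟩ := BoundedFormula.realize_exs.1 (he 0 1 ⊤ BoundedFormula.IsQF.top _ hN)
  exact ⟨x 0⟩

theorem Sigma1Elementary.exists_realize_sumElim {α β : Type*} [Finite α] [Finite β]
    (he : Sigma1Elementary e) {φ : L.Formula (α ⊕ β)} (hφ : φ.IsQF) {v : α → M} {w : β → N}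
    (h : φ.Realize (Sum.elim (e ∘ v) w)) : ∃ w' : β → M, φ.Realize (Sum.elim v w') := by
  obtain ⟨n, ⟨a⟩⟩ := Finite.exists_equiv_fin α
  obtain ⟨k, ⟨b⟩⟩ := Finite.exists_equiv_fin β
  let ψ : L.BoundedFormula (Fin n) k := BoundedFormula.relabel (Sum.map a b) φ
  have realize_ψ {P : Type (max u v)} [L.Structure P] (x : Fin n → P) (y : Fin k → P) :
      ψ.Realize x y ↔ φ.Realize (Sum.elim (x ∘ a) (y ∘ b)) := by
    refine (BoundedFormula.realize_relabel (n := 0)).trans ?_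
    rw [Sum.elim_comp_map, Fin.castAdd_zero]
    exact iff_of_eq (congrArg _ (Subsingleton.elim _ _))
  have hN : ψ.exs.Realize fun i => e (v (a.symm i)) := by
    refine BoundedFormula.realize_exs.2 ⟨w ∘ b.symm, (realize_ψ _ _).2 ?_⟩
    simpa [comp_def] using h
  obtain ⟨y, hy⟩ := BoundedFormula.realize_exs.1 (he n k ψ (hφ.relabel _) (v ∘ a.symm) hN)
  refine ⟨y ∘ b, ?_⟩
  simpa [comp_def] using (realize_ψ _ _).1 hy

theorem Sigma1Elementary.exists_leftInverse_realize [Nonempty M] (he : Sigma1Elementary e)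
    {φ : L.Formula N} (hφ : φ ∈ qfDiagram L N) : ∃ f : N → M, LeftInverse f e ∧ φ.Realize f := by
  classical
  -- Variables naming elements of `M` become parameters, the others get quantified existentially.
  let v : φ.freeVarFinset → M := fun x => invFun e x
  let g : φ.freeVarFinset → φ.freeVarFinset ⊕ φ.freeVarFinset := fun x =>
    if ∃ a, e a = x then Sum.inl x else Sum.inr x
  have hN : (φ.restrictFreeVar g).Realize (Sum.elim (e ∘ v) Subtype.val) default := by
    refine (BoundedFormula.realize_restrictFreeVar id fun x => ?_).2 hφ.2
    by_cases hx : ∃ a, e a = x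
    · simpa [g, v, hx] using invFun_eq hx
    · simp [g, hx]
  obtain ⟨w, hw⟩ := he.exists_realize_sumElim (isQF_restrictFreeVar hφ.1 g) hN
  refine ⟨extend e id (extend Subtype.val w (invFun e)), e.injective.extend_apply _ _,
    (BoundedFormula.realize_restrictFreeVar _ fun x => ?_).1 hw⟩
  by_cases hx : ∃ a, e a = x
  · obtain ⟨a, ha⟩ := hx
    simp [g, v, ← ha, e.injective.extend_apply, leftInverse_invFun e.injective a]
  · rw [extend_apply' _ _ _ hx, Subtype.val_injective.extend_apply]
    simp [g, hx]

theorem Sigma1Elementary.exists_ultrafilter [Nonempty M] (he : Sigma1Elementary e) :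
    ∃ U : Ultrafilter (N → M), (∀ᶠ f in U, LeftInverse f e) ∧
      ∀ φ ∈ qfDiagram L N, ∀ᶠ f in (U : Filter (N → M)), φ.Realize f := by
  let S (φ : L.Formula N) : Set (N → M) := {f | LeftInverse f e ∧ φ.Realize f}
  let F : Filter (N → M) := ⨅ φ : qfDiagram L N, 𝓟 (S φ)
  have top_mem : ⊤ ∈ qfDiagram L N := ⟨BoundedFormula.IsQF.top, BoundedFormula.realize_top.2 ⟨⟩⟩
  have : Nonempty (qfDiagram L N) := ⟨⊤, top_mem⟩
  have hF : F.NeBot := by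
    refine iInf_neBot_of_directed' (fun φ ψ => ⟨⟨φ ⊓ ψ, inf_mem_qfDiagram φ.2 ψ.2⟩, ?_, ?_⟩)
      fun φ => principal_neBot_iff.2 (he.exists_leftInverse_realize φ.2)
    · exact principal_mono.2 fun f hf => ⟨hf.1, (Formula.realize_inf.1 hf.2).1⟩
    · exact principal_mono.2 fun f hf => ⟨hf.1, (Formula.realize_inf.1 hf.2).2⟩
  have mem_U (φ) (hφ : φ ∈ qfDiagram L N) : ∀ᶠ f in Ultrafilter.of F, f ∈ S φ :=
    Ultrafilter.of_le F (mem_iInf_of_mem ⟨φ, hφ⟩ (mem_principal_self _))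
  exact ⟨Ultrafilter.of F, (mem_U ⊤ top_mem).mono fun f hf => hf.1,
    fun φ hφ => (mem_U φ hφ).mono fun f hf => hf.2⟩

end Sigma1

/-- Resurrection Lemma. -/
theorem resurrection (M N : Type (max u v)) [L.Structure M] [L.Structure N]
    (e : M ↪[L] N) (he : Sigma1Elementary e) :
    ∃ (Q : BStruc L) (j : N ↪[L] Q.carrier),
      ElementaryOn (L := L) fun a : M => j (e a) := by
  rcases isEmpty_or_nonempty N with hN | hN
  · exact ⟨⟨N, inferInstance⟩, Embedding.refl L N, elementaryOn_of_surjective e isEmptyElim⟩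
  -- Łoś's theorem needs the factors of the ultraproduct to be nonempty.
  have : Nonempty M := he.nonempty
  obtain ⟨U, hUe, hUN⟩ := he.exists_ultrafilter
  let j := embeddingOfQFDiagram (ultraEval U) fun φ hφ => (realize_ultraEval U φ id).2 (hUN φ hφ)
  exact ⟨⟨_, Ultraproduct.structure⟩, j,
    fun _ φ v => (realize_ultraEval_of_leftInverse hUe φ v).symm⟩

end ModelCompanionship
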